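/- The necessary condition of the subtree decomposition is not sufficient: there exist a strongly connected digraph G = (V, E), a start vertex s ∈ V, and two distinct vertices v, w ∈ V such that the set of marked vertices of G(s) dominating v in G(s) equals the set of marked vertices of G(s) dominating w in G(s), and the set of marked vertices of G^R(s) dominating v in G^R(s) equals the set of marked vertices of G^R(s) dominating w in G^R(s), yet v and w are not 2-edge-connected in G. -/

import Mathlib

variable {V : Type*}

/-- `p` is a path from `u` to `w` in the digraph with edge set `E`:
a nonempty list of vertices starting at `u`, ending at `w`, with consecutive edges in `E`. -/
def IsPathFrom (E : Set (V × V)) (u w : V) (p : List V) : Prop :=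
  p.head? = some u ∧ p.getLast? = some w ∧ p.Chain' (fun a b => (a, b) ∈ E)

/-- There is a path from `u` to `w` in the digraph with edge set `E`. -/
def Reaches (E : Set (V × V)) (u w : V) : Prop :=
  ∃ p, IsPathFrom E u w p

/-- Every vertex has a path to every other vertex. -/
def StronglyConnected (E : Set (V × V)) : Prop :=
  ∀ u w : V, Reaches E u w

/-- `v` and `w` are 2-edge-connected: `v = w` or, for every edge `e`,
there are paths from `v` to `w` and from `w` to `v` avoiding `e`. -/
def TwoEdgeConn (E : Set (V × V)) (v w : V) : Prop :=
  v = w ∨ ∀ e ∈ E, Reaches (E \ {e}) v w ∧ Reaches (E \ {e}) w v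

/-- `w` is 2-edge-connected from `v`: for every edge `e` there is a path
from `v` to `w` avoiding `e`. -/
def TwoEdgeConnFrom (E : Set (V × V)) (v w : V) : Prop :=
  ∀ e ∈ E, Reaches (E \ {e}) v w

/-- `u` dominates `w` in the flow graph with start vertex `s`:
every path from `s` to `w` contains `u`. -/
def Dominates (E : Set (V × V)) (s u w : V) : Prop :=
  ∀ p, IsPathFrom E s w p → u ∈ p

/-- `(u, w)` is a bridge of the flow graph with start vertex `s`:
every path from `s` to `w` contains the edge `(u, w)`. -/
def IsBridge (E : Set (V × V)) (s u w : V) : Prop :=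
  (u, w) ∈ E ∧ ∀ p, IsPathFrom E s w p → (u, w) ∈ p.zip p.tail

/-- `w` is marked in the flow graph with start vertex `s`: some bridge ends at `w`. -/
def Marked (E : Set (V × V)) (s w : V) : Prop :=
  ∃ u, IsBridge E s u w

/-- The reverse digraph: every edge direction is reversed. -/
def reverseE (E : Set (V × V)) : Set (V × V) :=
  {e | (e.2, e.1) ∈ E}

/-- `u` and `w` are mutually reachable. -/
def MutualReach (E : Set (V × V)) (u w : V) : Prop :=
  Reaches E u w ∧ Reaches E w u

/-- The number of strongly connected components: the number of equivalence
classes of the mutual-reachability relation. -/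
noncomputable def numSCC (E : Set (V × V)) : ℕ :=
  Nat.card (Quot (MutualReach E))

/-- `e` is a strong bridge: removing it increases the number of strongly
connected components. -/
def IsStrongBridge (E : Set (V × V)) (e : V × V) : Prop :=
  e ∈ E ∧ numSCC E < numSCC (E \ {e})

/-- `d` is the immediate dominator of `w` in the flow graph with start vertex `s`:
`d` is a proper dominator of `w` dominated by every proper dominator of `w`. -/
def ImmDomIs (E : Set (V × V)) (s w d : V) : Prop :=
  Dominates E s d w ∧ d ≠ w ∧ ∀ x, Dominates E s x w → x ≠ w → Dominates E s x d

/-- `r` is the deepest marked dominator `r_v` of `v`: either `r` is a marked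
dominator of `v` dominated by every marked dominator of `v`, or no marked vertex
dominates `v` and `r = s`. -/
def DeepestMarkedDomIs (E : Set (V × V)) (s v r : V) : Prop :=
  (Marked E s r ∧ Dominates E s r v ∧
    ∀ x, Marked E s x → Dominates E s x v → Dominates E s x r)
  ∨ (r = s ∧ ∀ x, Marked E s x → ¬ Dominates E s x v)

/-- `T(r)`: the vertices whose deepest marked dominator is `r`. -/
def Tset (E : Set (V × V)) (s r : V) : Set V :=
  {v | DeepestMarkedDomIs E s v r}

/-- The roots of the decomposition of the dominator tree: `s` and the marked vertices. -/
def IsRoot (E : Set (V × V)) (s r : V) : Prop :=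
  r = s ∨ Marked E s r

/-- `z` is a marked child (in the dominator tree) of a boundary vertex of `T(r)`. -/
def MarkedChildOfBoundary (E : Set (V × V)) (s r z : V) : Prop :=
  Marked E s z ∧ ∃ x ∈ Tset E s r, ImmDomIs E s z x

/-- The vertex set `V_r` of the auxiliary graph `G_r` (with `dr` playing the role
of `d(r)` when `r ≠ s`): the ordinary vertices `T(r)`, the marked children of
boundary vertices of `T(r)`, and (if `r ≠ s`) the vertex `d(r)`. -/
def auxVerts (E : Set (V × V)) (s r dr : V) : Set V :=
  Tset E s r ∪ {z | MarkedChildOfBoundary E s r z} ∪ {x | r ≠ s ∧ x = dr}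

/-- The edge set `E_r` of the auxiliary graph `G_r` (with `dr` playing the role of
`d(r)` when `r ≠ s`): edges of `G` between ordinary vertices; the edge `(v, w)` for
each boundary vertex `v ∈ T(r)` and marked child `w` of `v`; the edge `(d(r), r)` if
`r ≠ s`; and the shortcut edges of types (a), (b), (c). -/
def auxEdges (E : Set (V × V)) (s r dr : V) : Set (V × V) :=
  {e | e ∈ E ∧ e.1 ∈ Tset E s r ∧ e.2 ∈ Tset E s r} ∪
  {e | e.1 ∈ Tset E s r ∧ Marked E s e.2 ∧ ImmDomIs E s e.2 e.1} ∪
  {e | r ≠ s ∧ e = (dr, r)} ∪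
  {e | ∃ u v, (u, v) ∈ E ∧ u ∈ Tset E s r ∧ ¬ Dominates E s r v ∧ e = (u, dr)} ∪
  {e | ∃ u v z, (u, v) ∈ E ∧ v ∈ Tset E s r ∧ Dominates E s r u ∧ u ∉ Tset E s r ∧
      MarkedChildOfBoundary E s r z ∧ Dominates E s z u ∧ e = (z, v)} ∪
  {e | ∃ u v z, (u, v) ∈ E ∧ Dominates E s r u ∧ u ∉ Tset E s r ∧ ¬ Dominates E s r v ∧
      MarkedChildOfBoundary E s r z ∧ Dominates E s z u ∧ e = (z, dr)}

/-!
Take the digraph on `s, v, w, x` in which `v → s` is the only edge leaving `v` and the only edge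
entering `s`, while `s → w, x`, `w ⇄ x` and `w, x → v`. From `s`, both `v` and `w` can be reached
along two internally disjoint paths, so neither has a marked dominator. In the reverse digraph the
edge `s → v` is the only way out of `s`, and `w` is reached from `v` along two internally disjoint
paths, so `v` is the only marked dominator of each. Nevertheless removing `v → s` leaves `v`
without outgoing edges, so `v` no longer reaches `w`.
-/

section Paths

variable {E : Set (V × V)} {t u w : V} {p : List V}

theorem isPathFrom_iff_isChain :
    IsPathFrom E u w p ↔
      p.head? = some u ∧ p.getLast? = some w ∧ p.IsChain (fun a b => (a, b) ∈ E) :=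
  Iff.rfl

@[simp]
theorem isPathFrom_singleton_iff {a : V} : IsPathFrom E u w [a] ↔ a = u ∧ a = w := by
  simp [isPathFrom_iff_isChain]

@[simp]
theorem isPathFrom_cons_cons_iff {a b : V} :
    IsPathFrom E u w (a :: b :: p) ↔ a = u ∧ (a, b) ∈ E ∧ IsPathFrom E b w (b :: p) := by
  simp only [isPathFrom_iff_isChain, List.head?_cons, Option.some.injEq, List.getLast?_cons_cons,
    List.isChain_cons_cons, true_and]
  tauto

theorem IsPathFrom.exists_eq_cons_cons (hp : IsPathFrom E u w p) (huw : u ≠ w) :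
    ∃ b l, p = u :: b :: l ∧ (u, b) ∈ E := by
  match p, hp with
  | [], hp => simp [IsPathFrom] at hp
  | [a], hp =>
    obtain ⟨rfl, rfl⟩ := isPathFrom_singleton_iff.1 hp
    exact absurd rfl huw
  | a :: b :: l, hp =>
    obtain ⟨rfl, hab, -⟩ := isPathFrom_cons_cons_iff.1 hp
    exact ⟨b, l, rfl, hab⟩

theorem reaches_iff_reflTransGen :
    Reaches E u w ↔ Relation.ReflTransGen (fun a b => (a, b) ∈ E) u w := by
  constructor
  · rintro ⟨p, hp⟩
    induction p generalizing u with
    | nil => simp [IsPathFrom] at hp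
    | cons a l ih =>
      cases l with
      | nil =>
        obtain ⟨rfl, rfl⟩ := isPathFrom_singleton_iff.1 hp
        exact .refl
      | cons b l =>
        obtain ⟨rfl, hab, hbw⟩ := isPathFrom_cons_cons_iff.1 hp
        exact .head hab (ih hbw)
  · intro h
    obtain ⟨l, hchain, hlast⟩ := List.exists_isChain_cons_of_relationReflTransGen h
    exact ⟨u :: l, rfl, by rw [List.getLast?_eq_some_getLast (List.cons_ne_nil u l), hlast], hchain⟩

theorem Reaches.trans (huw : Reaches E u w) (hwt : Reaches E w t) : Reaches E u t :=
  reaches_iff_reflTransGen.2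
    ((reaches_iff_reflTransGen.1 huw).trans (reaches_iff_reflTransGen.1 hwt))

theorem stronglyConnected_of_hub (s : V) (hto : ∀ u, Reaches E u s) (hfrom : ∀ u, Reaches E s u) :
    StronglyConnected E :=
  fun u w => (hto u).trans (hfrom w)

theorem not_twoEdgeConn_of_unique_out_edge (hmem : (u, t) ∈ E) (huniq : ∀ b, (u, b) ∈ E → b = t)
    (huw : u ≠ w) : ¬ TwoEdgeConn E u w := by
  rintro (rfl | hconn)
  · exact huw rfl
  · obtain ⟨⟨p, hp⟩, -⟩ := hconn (u, t) hmem
    obtain ⟨b, -, -, hub, hne⟩ := hp.exists_eq_cons_cons huw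
    exact hne (congrArg (Prod.mk u) (huniq b hub))

end Paths

section MarkedDominators

/-- The marked vertices of the flow graph of `E` with start vertex `s` that dominate `t`. They
determine the subtree containing `t` when the dominator tree is cut at the bridges. -/
def markedDominators (E : Set (V × V)) (s t : V) : Set V :=
  {x | Marked E s x ∧ Dominates E s x t}

variable {E : Set (V × V)} {s t a : V} {p q : List V}

theorem not_marked_start : ¬ Marked E s s := by
  rintro ⟨u, -, hbridge⟩
  simpa using hbridge [s] (by simp)

theorem not_marked_of_no_common_edge_into (hp : IsPathFrom E s t p) (hq : IsPathFrom E s t q)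
    (hedge : ∀ u, (u, t) ∈ p.zip p.tail → (u, t) ∉ q.zip q.tail) : ¬ Marked E s t := by
  rintro ⟨u, -, hbridge⟩
  exact hedge u (hbridge p hp) (hbridge q hq)

theorem markedDominators_subset_of_paths {C : Set V} (hp : IsPathFrom E s t p)
    (hq : IsPathFrom E s t q) (hedge : ∀ u, (u, t) ∈ p.zip p.tail → (u, t) ∉ q.zip q.tail)
    (hvert : ∀ x ∈ p, x ∈ q → x = s ∨ x = t ∨ x ∈ C) : markedDominators E s t ⊆ C := by
  rintro x ⟨hmarked, hdom⟩
  rcases hvert x (hdom p hp) (hdom q hq) with rfl | rfl | hx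
  · exact absurd hmarked not_marked_start
  · exact absurd hmarked (not_marked_of_no_common_edge_into hp hq hedge)
  · exact hx

theorem dominates_of_unique_out_edge (huniq : ∀ b, (s, b) ∈ E → b = a) (hst : s ≠ t) :
    Dominates E s a t := by
  intro p hp
  obtain ⟨b, l, rfl, hsb⟩ := hp.exists_eq_cons_cons hst
  simp [huniq b hsb]

theorem marked_of_unique_out_edge (hmem : (s, a) ∈ E) (huniq : ∀ b, (s, b) ∈ E → b = a)
    (hsa : s ≠ a) : Marked E s a := by
  refine ⟨s, hmem, fun p hp => ?_⟩
  obtain ⟨b, l, rfl, hsb⟩ := hp.exists_eq_cons_cons hsa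
  simp [huniq b hsb]

theorem mem_markedDominators_of_unique_out_edge (hmem : (s, a) ∈ E)
    (huniq : ∀ b, (s, b) ∈ E → b = a) (hsa : s ≠ a) (hst : s ≠ t) :
    a ∈ markedDominators E s t :=
  ⟨marked_of_unique_out_edge hmem huniq hsa, dominates_of_unique_out_edge huniq hst⟩

theorem markedDominators_subset_singleton_of_edge (hmem : (s, a) ∈ E) :
    markedDominators E s a ⊆ {a} := by
  rintro x ⟨hmarked, hdom⟩
  have hx : x = s ∨ x = a := by simpa using hdom [s, a] (by simp [hmem])
  rcases hx with rfl | rfl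
  · exact absurd hmarked not_marked_start
  · rfl

end MarkedDominators

/-- The vertices of the counterexample: the start vertex `s`, the two vertices `v` and `w` to be
compared, and an auxiliary vertex `x`. -/
inductive WitnessVertex
  | s | v | w | x
  deriving DecidableEq

namespace WitnessVertex

instance : Fintype WitnessVertex :=
  Fintype.ofList [s, v, w, x] (by rintro ⟨⟩ <;> simp)

/-- The edge set of the counterexample: `(v, s)` is the only edge leaving `v` and the only edge
entering `s`. -/
def edges : Set (WitnessVertex × WitnessVertex) :=
  {(v, s), (s, w), (s, x), (w, x), (x, w), (w, v), (x, v)}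

theorem reaches_s (u : WitnessVertex) : Reaches edges u s := by
  cases u with
  | s => exact ⟨[s], by simp⟩
  | v => exact ⟨[v, s], by simp [edges]⟩
  | w => exact ⟨[w, v, s], by simp [edges]⟩
  | x => exact ⟨[x, v, s], by simp [edges]⟩

theorem s_reaches (u : WitnessVertex) : Reaches edges s u := by
  cases u with
  | s => exact ⟨[s], by simp⟩
  | v => exact ⟨[s, w, v], by simp [edges]⟩
  | w => exact ⟨[s, w], by simp [edges]⟩
  | x => exact ⟨[s, x], by simp [edges]⟩

theorem stronglyConnected_edges : StronglyConnected edges :=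
  stronglyConnected_of_hub s reaches_s s_reaches

theorem markedDominators_edges_v : markedDominators edges s v = ∅ :=
  Set.subset_empty_iff.1 <| markedDominators_subset_of_paths (p := [s, w, v]) (q := [s, x, v])
    (by simp [edges]) (by simp [edges]) (by simp) (by simp)

theorem markedDominators_edges_w : markedDominators edges s w = ∅ :=
  Set.subset_empty_iff.1 <| markedDominators_subset_of_paths (p := [s, w]) (q := [s, x, w])
    (by simp [edges]) (by simp [edges]) (by simp) (by simp)

theorem mk_s_mem_reverseE_edges_iff {b : WitnessVertex} : (s, b) ∈ reverseE edges ↔ b = v := by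
  simp [reverseE, edges]

theorem v_mem_markedDominators_reverseE_edges {t : WitnessVertex} (hst : s ≠ t) :
    v ∈ markedDominators (reverseE edges) s t :=
  mem_markedDominators_of_unique_out_edge (mk_s_mem_reverseE_edges_iff.2 rfl)
    (fun _ => mk_s_mem_reverseE_edges_iff.1) (by simp) hst

theorem markedDominators_reverseE_edges_v : markedDominators (reverseE edges) s v = {v} := by
  have hsub : markedDominators (reverseE edges) s v ⊆ {v} :=
    markedDominators_subset_singleton_of_edge (mk_s_mem_reverseE_edges_iff.2 rfl)
  exact hsub.antisymm <|
    Set.singleton_subset_iff.2 (v_mem_markedDominators_reverseE_edges (by simp))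

theorem markedDominators_reverseE_edges_w : markedDominators (reverseE edges) s w = {v} := by
  have hsub : markedDominators (reverseE edges) s w ⊆ {v} :=
    markedDominators_subset_of_paths (p := [s, v, w]) (q := [s, v, x, w])
      (by simp [reverseE, edges]) (by simp [reverseE, edges]) (by simp) (by simp)
  exact hsub.antisymm <|
    Set.singleton_subset_iff.2 (v_mem_markedDominators_reverseE_edges (by simp))

theorem not_twoEdgeConn_edges : ¬ TwoEdgeConn edges v w :=
  not_twoEdgeConn_of_unique_out_edge (t := s) (by simp [edges]) (by simp [edges]) (by simp)

end WitnessVertex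

/-- The necessary condition of the subtree decomposition is not sufficient: there
are a strongly connected digraph, a start vertex `s`, and distinct vertices `v, w`
lying in the same subtree of the decomposition of the dominator tree of `G(s)` and
of `G^R(s)` (the marked dominators of `v` and `w` coincide in both flow graphs),
yet `v` and `w` are not 2-edge-connected. -/
theorem same_subtrees_not_sufficient :
    ∃ (V : Type) (_ : Fintype V) (E : Set (V × V)) (s v w : V),
      StronglyConnected E ∧ v ≠ w ∧
      {x | Marked E s x ∧ Dominates E s x v} =
        {x | Marked E s x ∧ Dominates E s x w} ∧
      {x | Marked (reverseE E) s x ∧ Dominates (reverseE E) s x v} =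
        {x | Marked (reverseE E) s x ∧ Dominates (reverseE E) s x w} ∧
      ¬ TwoEdgeConn E v w := by
  open WitnessVertex in
  exact ⟨WitnessVertex, inferInstance, edges, s, v, w, stronglyConnected_edges, by simp,
    markedDominators_edges_v.trans markedDominators_edges_w.symm,
    markedDominators_reverseE_edges_v.trans markedDominators_reverseE_edges_w.symm,
    not_twoEdgeConn_edges⟩
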